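/- Let L be a type of formulas with a variable function var : L → Set V (each var(α) finite) where V is infinite, with variables embedded via an injection ι : V → L satisfying var(ι q) = {q}, and let ⊢ be any consequence relation on L. Then the pure right variable inclusion companion ⊢ᵖʳ, defined by Γ ⊢ᵖʳ α iff Γ ⊢ α and var(α) ⊆ var(Γ), is NF-paraconsistent: there exists α ∈ L such that for every β ∈ L there is some γ ∈ L with {α, β} ⊬ᵖʳ γ. -/

import Mathlib

/-- The set of variables occurring in a set of formulas. -/
def varSet {L V : Type*} (var : L → Set V) (Γ : Set L) : Set V := ⋃ α ∈ Γ, var α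

/-- The pure right variable inclusion companion of a consequence relation. -/
def PRVI {L V : Type*} (var : L → Set V) (vdash : Set L → L → Prop)
    (Γ : Set L) (α : L) : Prop :=
  vdash Γ α ∧ var α ⊆ varSet var Γ

section

variable {L V : Type*} {var : L → Set V}

theorem finite_varSet {Γ : Set L} (hΓ : Γ.Finite)
    (hfin : ∀ α ∈ Γ, (var α).Finite) : (varSet var Γ).Finite :=
  hΓ.biUnion hfin

theorem varSet_univ (hvar : ∀ q : V, ∃ α : L, q ∈ var α) :
    varSet var Set.univ = Set.univ :=
  Set.eq_univ_of_forall fun q =>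
    let ⟨α, hq⟩ := hvar q
    Set.mem_biUnion (Set.mem_univ α) hq

theorem exists_not_prvi_of_not_subset (vdash : Set L → L → Prop)
    {Γ Δ : Set L} (h : ¬ varSet var Δ ⊆ varSet var Γ) :
    ∃ γ ∈ Δ, ¬ PRVI var vdash Γ γ := by
  by_contra! hderiv
  exact h (Set.iUnion₂_subset fun γ hγ => (hderiv γ hγ).2)

theorem prvi_nf_paraconsistent_general
    (hinf : (varSet var Set.univ).Infinite) (vdash : Set L → L → Prop)
    {Γ : Set L} (hΓ : Γ.Finite) (hfin : ∀ α ∈ Γ, (var α).Finite) :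
    ∃ γ : L, ¬ PRVI var vdash Γ γ := by
  have hfresh : ¬ varSet var Set.univ ⊆ varSet var Γ := fun h =>
    hinf ((finite_varSet hΓ hfin).subset h)
  obtain ⟨γ, -, hγ⟩ := exists_not_prvi_of_not_subset vdash hfresh
  exact ⟨γ, hγ⟩

end

/-- The pure right variable inclusion companion of any consequence relation is
NF-paraconsistent. -/
theorem prvi_nf_paraconsistent {L V : Type*} [Infinite V]
    (var : L → Set V) (hfin : ∀ α : L, (var α).Finite)
    (ι : V → L) (hι : Function.Injective ι) (hιvar : ∀ q : V, var (ι q) = {q})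
    (vdash : Set L → L → Prop) :
    ∃ α : L, ∀ β : L, ∃ γ : L, ¬ PRVI var vdash {α, β} γ := by
  have hcover : varSet var Set.univ = Set.univ :=
    varSet_univ fun q => ⟨ι q, (hιvar q).symm ▸ Set.mem_singleton q⟩
  exact ⟨ι (Classical.arbitrary V), fun β => prvi_nf_paraconsistent_general
    (hcover ▸ Set.infinite_univ) vdash (Set.toFinite _) fun α _ => hfin α⟩
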